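/- arXiv:2507.16433 — 2 statements merged into one kernel-verified Lean document; each statement's English description precedes it below -/
import Mathlib

section
/- Let p, T, K ≥ 1, let R be a p×T real matrix, let Q be a T×T orthogonal projection (Qᵀ = Q, Q² = Q) with tr(Q) = K, let λ ∈ ℝ, and let F be a T×K real matrix with FᵀF = T·I_K. Set B = T⁻¹RF, P_F = T⁻¹FFᵀ, and V = T⁻¹RᵀR − λT⁻¹(I_T − 2Q). Then the penalized objective satisfies the identity (1/T)‖R − BFᵀ‖_F² + (λ/T)‖P_F − Q‖_F² = (1/T)(tr(RᵀR) + λK − tr(FᵀVF)). -/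
open Matrix

/-- Squared Frobenius norm of a real matrix. -/
noncomputable def frobSq {m n : ℕ} (A : Matrix (Fin m) (Fin n) ℝ) : ℝ :=
  Matrix.trace (Aᵀ * A)

/-- With `Q` a `T × T` orthogonal projection of trace `K`, `F` a `T × K`
factor matrix with `FᵀF = T·I`, `B = T⁻¹ R F`, `P_F = T⁻¹ F Fᵀ`, and
`V = T⁻¹ RᵀR − λ T⁻¹ (I − 2Q)`, the penalized objective satisfies
`(1/T)‖R − BFᵀ‖_F² + (λ/T)‖P_F − Q‖_F² = (1/T)(tr(RᵀR) + λK − tr(FᵀVF))`. -/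
theorem penalized_objective_identity (p T K : ℕ) (hp : 1 ≤ p) (hT : 1 ≤ T) (hK : 1 ≤ K)
    (R : Matrix (Fin p) (Fin T) ℝ)
    (Q : Matrix (Fin T) (Fin T) ℝ)
    (hQsym : Qᵀ = Q) (hQidem : Q * Q = Q) (hQtr : Matrix.trace Q = (K : ℝ))
    (lam : ℝ)
    (F : Matrix (Fin T) (Fin K) ℝ)
    (hF : Fᵀ * F = (T : ℝ) • (1 : Matrix (Fin K) (Fin K) ℝ))
    (B : Matrix (Fin p) (Fin K) ℝ) (hB : B = (T : ℝ)⁻¹ • (R * F))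
    (PF : Matrix (Fin T) (Fin T) ℝ) (hPF : PF = (T : ℝ)⁻¹ • (F * Fᵀ))
    (V : Matrix (Fin T) (Fin T) ℝ)
    (hV : V = (T : ℝ)⁻¹ • (Rᵀ * R) -
      (lam * (T : ℝ)⁻¹) • ((1 : Matrix (Fin T) (Fin T) ℝ) - (2 : ℝ) • Q)) :
    (1 / (T : ℝ)) * frobSq (R - B * Fᵀ) + (lam / (T : ℝ)) * frobSq (PF - Q) =
      (1 / (T : ℝ)) *
        (Matrix.trace (Rᵀ * R) + lam * (K : ℝ) - Matrix.trace (Fᵀ * V * F)) := by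
  have hT0 : (T : ℝ) ≠ 0 := by
    have : T ≠ 0 := by omega
    exact_mod_cast this
  have hs : PFᵀ = PF := by
    rw [hPF]; simp [Matrix.transpose_mul]
  have hid : PF * PF = PF := by
    have h1 : F * Fᵀ * (F * Fᵀ) = (T : ℝ) • (F * Fᵀ) := by
      rw [Matrix.mul_assoc, ← Matrix.mul_assoc Fᵀ, hF]; simp
    rw [hPF, Matrix.smul_mul, Matrix.mul_smul, h1, smul_smul (T : ℝ)⁻¹ (T : ℝ),
      inv_mul_cancel₀ hT0, one_smul]
  have hFF : F * Fᵀ = (T : ℝ) • PF := by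
    rw [hPF, smul_smul, mul_inv_cancel₀ hT0, one_smul]
  have htr : Matrix.trace PF = K := by
    rw [hPF, Matrix.trace_smul, Matrix.trace_mul_comm, hF, Matrix.trace_smul, smul_smul,
      inv_mul_cancel₀ hT0, one_smul]
    simp
  have hBF : B * Fᵀ = R * PF := by
    rw [hB, hPF, Matrix.smul_mul, Matrix.mul_smul, Matrix.mul_assoc]
  have e1 : frobSq (R - B * Fᵀ) = Matrix.trace (Rᵀ * R) - Matrix.trace (Rᵀ * R * PF) := by
    have h1 : Matrix.trace (PF * Rᵀ * R) = Matrix.trace (Rᵀ * R * PF) := by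
      rw [Matrix.mul_assoc, Matrix.trace_mul_comm]
    have h2 : Matrix.trace (PF * Rᵀ * (R * PF)) = Matrix.trace (Rᵀ * R * PF) := by
      rw [Matrix.mul_assoc, Matrix.trace_mul_comm, ← Matrix.mul_assoc Rᵀ,
        Matrix.mul_assoc _ PF PF, hid]
    unfold frobSq
    rw [hBF, Matrix.transpose_sub, Matrix.transpose_mul, hs, Matrix.sub_mul, Matrix.mul_sub,
      Matrix.mul_sub, Matrix.trace_sub, Matrix.trace_sub, Matrix.trace_sub, h1, h2,
      ← Matrix.mul_assoc]
    ring
  have e2 : frobSq (PF - Q) = 2 * K - 2 * Matrix.trace (Q * PF) := by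
    unfold frobSq
    rw [Matrix.transpose_sub, hs, hQsym, Matrix.sub_mul, Matrix.mul_sub,
      Matrix.mul_sub, Matrix.trace_sub, Matrix.trace_sub, Matrix.trace_sub, hid, hQidem, htr,
      hQtr, Matrix.trace_mul_comm PF Q]
    ring
  have e3 : Matrix.trace (Fᵀ * V * F) = Matrix.trace (Rᵀ * R * PF)
      - lam * (K - 2 * Matrix.trace (Q * PF)) := by
    rw [Matrix.mul_assoc, Matrix.trace_mul_comm, Matrix.mul_assoc, hFF, hV]
    simp only [Matrix.sub_mul, Matrix.smul_mul, Matrix.mul_smul, Matrix.trace_sub,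
      Matrix.trace_smul, Matrix.one_mul, htr, smul_eq_mul]
    field_simp
  rw [e1, e2, e3]
  ring
end

section
/- Let p, T, K ≥ 1 with K ≤ T, let R be a p×T real matrix, let λ ≥ 0, and let Q be a T×T orthogonal projection (Qᵀ = Q, Q² = Q) with tr(Q) = K. Set V = T⁻¹RᵀR − λT⁻¹(I_T − 2Q). Then the minimum of the penalized objective (1/T)‖R − BFᵀ‖_F² + (λ/T)‖T⁻¹FFᵀ − Q‖_F² over all p×K matrices B and all T×K matrices F with FᵀF = T·I_K equals (1/T)tr(RᵀR) + λK/T − Σ_{i=1}^K θ_i(V), and it is attained at F̂ = √T·(matrix of orthonormal eigenvectors of V corresponding to its K largest eigenvalues) together with B̂ = T⁻¹RF̂. -/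
open Matrix

lemma aux_frob_nonneg {m n : ℕ} (A : Matrix (Fin m) (Fin n) ℝ) : 0 ≤ frobSq A := by
  unfold frobSq
  simp only [Matrix.trace, Matrix.diag, Matrix.mul_apply, Matrix.transpose_apply]
  exact Finset.sum_nonneg fun i _ => Finset.sum_nonneg fun j _ => mul_self_nonneg _

lemma aux_frob_mul {m n : ℕ} (A : Matrix (Fin m) (Fin n) ℝ) (P : Matrix (Fin n) (Fin n) ℝ)
    (hs : Pᵀ = P) (hi : P * P = P) : frobSq (A * P) = Matrix.trace (Aᵀ * A * P) := by
  unfold frobSq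
  rw [Matrix.transpose_mul, hs, Matrix.mul_assoc, Matrix.trace_mul_comm, ← Matrix.mul_assoc,
    Matrix.mul_assoc, hi]

lemma aux_compl {n : ℕ} (P : Matrix (Fin n) (Fin n) ℝ)
    (hs : Pᵀ = P) (hi : P * P = P) : (1 - P)ᵀ = 1 - P ∧ (1 - P) * (1 - P) = 1 - P := by
  constructor
  · rw [Matrix.transpose_sub, hs, Matrix.transpose_one]
  · rw [Matrix.mul_sub, Matrix.sub_mul, Matrix.sub_mul, hi]; simp

lemma aux_frob_compl {m n : ℕ} (A : Matrix (Fin m) (Fin n) ℝ) (P : Matrix (Fin n) (Fin n) ℝ)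
    (hs : Pᵀ = P) (hi : P * P = P) :
    frobSq (A * (1 - P)) = frobSq A - Matrix.trace (Aᵀ * A * P) := by
  obtain ⟨h1, h2⟩ := aux_compl P hs hi
  rw [aux_frob_mul A _ h1 h2, Matrix.mul_sub, Matrix.trace_sub, Matrix.mul_one]
  rfl

lemma aux_kyfan {T K : ℕ} (hK : 1 ≤ K) (hKT : K ≤ T) (θ : Fin T → ℝ) (hθ : Antitone θ)
    (w : Fin T → ℝ) (h0 : ∀ t, 0 ≤ w t) (h1 : ∀ t, w t ≤ 1) (hs : ∑ t, w t = K) :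
    ∑ t, θ t * w t ≤ ∑ i : Fin K, θ (Fin.castLE hKT i) := by
  set c := θ ⟨K - 1, by omega⟩ with hc
  have key : ∀ t : Fin T, (θ t - c) * w t ≤ if t.val < K then θ t - c else 0 := by
    intro t
    split_ifs with h
    · have : c ≤ θ t := hθ (by rw [Fin.le_def]; simp; omega)
      nlinarith [h1 t]
    · have : θ t ≤ c := hθ (by rw [Fin.le_def]; simp; omega)
      nlinarith [h0 t]
  have h2 := Finset.sum_le_sum fun t (_ : t ∈ Finset.univ) => key t
  have h3 : ∑ t : Fin T, (if t.val < K then θ t - c else 0)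
      = ∑ i : Fin K, (θ (Fin.castLE hKT i) - c) := by
    rw [← Finset.sum_filter]
    symm
    refine Finset.sum_bij (fun i _ => Fin.castLE hKT i) ?_ ?_ ?_ ?_
    · intro i _; simp
    · intro i _ j _ h; simpa using h
    · intro t ht
      simp at ht
      exact ⟨⟨t, ht⟩, Finset.mem_univ _, rfl⟩
    · intro i _; rfl
  rw [h3] at h2
  simp only [sub_mul, Finset.sum_sub_distrib, ← Finset.mul_sum, hs] at h2
  simp at h2
  linarith

lemma aux_diag {n : ℕ} (P : Matrix (Fin n) (Fin n) ℝ)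
    (hs : Pᵀ = P) (hi : P * P = P) (t : Fin n) : 0 ≤ P t t ∧ P t t ≤ 1 := by
  have h : P t t = ∑ s, P t s * P t s := by
    conv_lhs => rw [← hi]
    rw [Matrix.mul_apply]
    refine Finset.sum_congr rfl fun s _ => ?_
    rw [show P s t = P t s from congrFun (congrFun hs t) s]
  have h2 : P t t * P t t ≤ ∑ s, P t s * P t s :=
    Finset.single_le_sum (f := fun s => P t s * P t s) (fun s _ => mul_self_nonneg _)
      (Finset.mem_univ t)
  rw [← h] at h2
  constructor
  · rw [h]; exact Finset.sum_nonneg fun s _ => mul_self_nonneg _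
  · nlinarith

lemma aux_obj {p T K : ℕ} (hT : (T : ℝ) ≠ 0)
    (R : Matrix (Fin p) (Fin T) ℝ) (lam : ℝ)
    (Q : Matrix (Fin T) (Fin T) ℝ)
    (hQsym : Qᵀ = Q) (hQidem : Q * Q = Q) (hQtr : Matrix.trace Q = (K : ℝ))
    (P : Matrix (Fin T) (Fin T) ℝ)
    (hs : Pᵀ = P) (hi : P * P = P) (hPtr : Matrix.trace P = (K : ℝ)) :
    (1 / (T : ℝ)) * frobSq (R * (1 - P)) + (lam / (T : ℝ)) * frobSq (P - Q) =
    (1 / (T : ℝ)) * Matrix.trace (Rᵀ * R) + lam * (K : ℝ) / (T : ℝ) -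
      Matrix.trace (((T : ℝ)⁻¹ • (Rᵀ * R) -
      (lam * (T : ℝ)⁻¹) • ((1 : Matrix (Fin T) (Fin T) ℝ) - (2 : ℝ) • Q)) * P) := by
  rw [aux_frob_compl R P hs hi]
  have : frobSq (P - Q) = 2 * K - 2 * Matrix.trace (Q * P) := by
    unfold frobSq
    rw [Matrix.transpose_sub, hs, hQsym, Matrix.mul_sub, Matrix.sub_mul, Matrix.sub_mul, hi,
      hQidem]
    simp only [Matrix.trace_sub, hQtr, hPtr]
    rw [Matrix.trace_mul_comm P Q]; ring
  rw [this]
  simp only [Matrix.sub_mul, Matrix.smul_mul, Matrix.trace_sub, Matrix.trace_smul, smul_eq_mul,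
    Matrix.one_mul, hPtr, frobSq]
  field_simp
  ring

/-- With `Q` a `T × T` orthogonal projection of trace `K`, `λ ≥ 0`,
`V = T⁻¹RᵀR − λT⁻¹(I − 2Q)`, and `θ` an antitone enumeration of the eigenvalues of `V`,
the minimum of `(1/T)‖R − BFᵀ‖_F² + (λ/T)‖T⁻¹FFᵀ − Q‖_F²` over all `B` and all `F` with
`FᵀF = T·I` equals `(1/T)tr(RᵀR) + λK/T − Σ_{i<K} θ i`, and it is attained at
`F̂ = √T ·(orthonormal eigenvectors of the K largest eigenvalues of V)` together with
`B̂ = T⁻¹RF̂`. -/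
theorem penalized_objective_minimum (p T K : ℕ) (hp : 1 ≤ p) (hT : 1 ≤ T)
    (hK : 1 ≤ K) (hKT : K ≤ T)
    (R : Matrix (Fin p) (Fin T) ℝ)
    (lam : ℝ) (hlam : 0 ≤ lam)
    (Q : Matrix (Fin T) (Fin T) ℝ)
    (hQsym : Qᵀ = Q) (hQidem : Q * Q = Q) (hQtr : Matrix.trace Q = (K : ℝ))
    (V : Matrix (Fin T) (Fin T) ℝ)
    (hV : V = (T : ℝ)⁻¹ • (Rᵀ * R) -
      (lam * (T : ℝ)⁻¹) • ((1 : Matrix (Fin T) (Fin T) ℝ) - (2 : ℝ) • Q))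
    (hVH : V.IsHermitian)
    (θ : Fin T → ℝ) (hθ : Antitone θ)
    (hperm : ∃ σ : Equiv.Perm (Fin T), hVH.eigenvalues = θ ∘ σ) :
    (∀ (B : Matrix (Fin p) (Fin K) ℝ) (F : Matrix (Fin T) (Fin K) ℝ),
      Fᵀ * F = (T : ℝ) • (1 : Matrix (Fin K) (Fin K) ℝ) →
      (1 / (T : ℝ)) * Matrix.trace (Rᵀ * R) + lam * (K : ℝ) / (T : ℝ) -
          ∑ i : Fin K, θ (Fin.castLE hKT i) ≤
        (1 / (T : ℝ)) * frobSq (R - B * Fᵀ) +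
          (lam / (T : ℝ)) * frobSq ((T : ℝ)⁻¹ • (F * Fᵀ) - Q)) ∧
    (∃ F : Matrix (Fin T) (Fin K) ℝ,
      Fᵀ * F = (T : ℝ) • (1 : Matrix (Fin K) (Fin K) ℝ) ∧
      (∀ i : Fin K, V *ᵥ (fun t => F t i) = θ (Fin.castLE hKT i) • (fun t => F t i)) ∧
      (1 / (T : ℝ)) * frobSq (R - ((T : ℝ)⁻¹ • (R * F)) * Fᵀ) +
          (lam / (T : ℝ)) * frobSq ((T : ℝ)⁻¹ • (F * Fᵀ) - Q) =
        (1 / (T : ℝ)) * Matrix.trace (Rᵀ * R) + lam * (K : ℝ) / (T : ℝ) -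
          ∑ i : Fin K, θ (Fin.castLE hKT i)) := by
  have hT0 : (T : ℝ) ≠ 0 := by exact_mod_cast (by omega : T ≠ 0)
  have hP : ∀ F : Matrix (Fin T) (Fin K) ℝ, Fᵀ * F = (T : ℝ) • (1 : Matrix (Fin K) (Fin K) ℝ) →
      ((T : ℝ)⁻¹ • (F * Fᵀ))ᵀ = (T : ℝ)⁻¹ • (F * Fᵀ) ∧
      ((T : ℝ)⁻¹ • (F * Fᵀ)) * ((T : ℝ)⁻¹ • (F * Fᵀ)) = (T : ℝ)⁻¹ • (F * Fᵀ) ∧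
      Matrix.trace ((T : ℝ)⁻¹ • (F * Fᵀ)) = (K : ℝ) ∧
      Fᵀ * (1 - (T : ℝ)⁻¹ • (F * Fᵀ)) = 0 := by
    intro F hF
    have h4 : Fᵀ * ((T : ℝ)⁻¹ • (F * Fᵀ)) = Fᵀ := by
      rw [Matrix.mul_smul, ← Matrix.mul_assoc, hF, Matrix.smul_mul, Matrix.one_mul, smul_smul,
        inv_mul_cancel₀ hT0, one_smul]
    refine ⟨?_, ?_, ?_, ?_⟩
    · rw [Matrix.transpose_smul, Matrix.transpose_mul, Matrix.transpose_transpose]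
    · rw [Matrix.smul_mul, Matrix.mul_assoc, h4]
    · rw [Matrix.trace_smul, Matrix.trace_mul_comm, hF, Matrix.trace_smul, Matrix.trace_one]
      simp [hT0]
    · rw [Matrix.mul_sub, h4, Matrix.mul_one, sub_self]
  obtain ⟨σ, hσ⟩ := hperm
  have hU : ∃ U : Matrix (Fin T) (Fin T) ℝ, Uᵀ * U = 1 ∧ V * U = U * Matrix.diagonal θ := by
    let U : Matrix (Fin T) (Fin T) ℝ := fun t j => hVH.eigenvectorBasis (σ.symm j) t
    refine ⟨U, ?_, ?_⟩
    · ext i j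
      have h := orthonormal_iff_ite.mp hVH.eigenvectorBasis.orthonormal (σ.symm i) (σ.symm j)
      rw [Matrix.mul_apply, Matrix.one_apply]
      simp only [EmbeddingLike.apply_eq_iff_eq] at h
      rw [← h, PiLp.inner_apply]
      refine Finset.sum_congr rfl fun t _ => ?_
      simp only [RCLike.inner_apply, conj_trivial]
      exact mul_comm _ _
    · ext t j
      have h := congrFun (hVH.mulVec_eigenvectorBasis (σ.symm j)) t
      rw [Matrix.mul_diagonal]
      rw [hσ] at h
      simp at h
      rw [mul_comm, ← h]
      rfl
  obtain ⟨U, hU1, hVU⟩ := hU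
  have hU2 : U * Uᵀ = 1 := mul_eq_one_comm.mp hU1
  have hVd : V = U * Matrix.diagonal θ * Uᵀ := by
    rw [← hVU, Matrix.mul_assoc, hU2, Matrix.mul_one]
  constructor
  · intro B F hF
    obtain ⟨hs, hi, ht, h0⟩ := hP F hF
    set P := (T : ℝ)⁻¹ • (F * Fᵀ) with hPdef
    have e := aux_obj hT0 R lam Q hQsym hQidem hQtr P hs hi ht
    rw [← hV] at e
    have hle : frobSq (R * (1 - P)) ≤ frobSq (R - B * Fᵀ) := by
      have h1 : R * (1 - P) = (R - B * Fᵀ) * (1 - P) := by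
        rw [Matrix.sub_mul, Matrix.mul_assoc B, h0, Matrix.mul_zero, sub_zero]
      rw [h1, aux_frob_compl _ P hs hi, ← aux_frob_mul _ P hs hi]
      linarith [aux_frob_nonneg ((R - B * Fᵀ) * P)]
    have hle2 : (1 / (T : ℝ)) * frobSq (R * (1 - P)) ≤ (1 / (T : ℝ)) * frobSq (R - B * Fᵀ) :=
      mul_le_mul_of_nonneg_left hle (by positivity)
    have hk : Matrix.trace (V * P) ≤ ∑ i : Fin K, θ (Fin.castLE hKT i) := by
      have hs' : (Uᵀ * P * U)ᵀ = Uᵀ * P * U := by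
        rw [Matrix.transpose_mul, Matrix.transpose_mul, hs, Matrix.transpose_transpose,
          Matrix.mul_assoc]
      have hi' : (Uᵀ * P * U) * (Uᵀ * P * U) = Uᵀ * P * U := by
        calc (Uᵀ * P * U) * (Uᵀ * P * U) = Uᵀ * P * (U * Uᵀ) * P * U := by
              simp only [Matrix.mul_assoc]
          _ = Uᵀ * (P * P) * U := by rw [hU2]; simp only [Matrix.mul_assoc, Matrix.one_mul]
          _ = _ := by rw [hi]
      have ht' : Matrix.trace (Uᵀ * P * U) = K := by
        rw [Matrix.trace_mul_comm, ← Matrix.mul_assoc, hU2, Matrix.one_mul, ht]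
      have hv : Matrix.trace (V * P) = ∑ t, θ t * (Uᵀ * P * U) t t := by
        rw [hVd, Matrix.mul_assoc, Matrix.mul_assoc, Matrix.trace_mul_comm, Matrix.mul_assoc]
        simp [Matrix.trace, Matrix.diagonal_mul]
      rw [hv]
      exact aux_kyfan hK hKT θ hθ _ (fun t => (aux_diag _ hs' hi' t).1)
        (fun t => (aux_diag _ hs' hi' t).2) ht'
    linarith
  · let F : Matrix (Fin T) (Fin K) ℝ := fun t i => Real.sqrt T * U t (Fin.castLE hKT i)
    have hF : Fᵀ * F = (T : ℝ) • (1 : Matrix (Fin K) (Fin K) ℝ) := by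
      ext i j
      have h := congrFun (congrFun hU1 (Fin.castLE hKT i)) (Fin.castLE hKT j)
      rw [Matrix.mul_apply, Matrix.one_apply] at h
      rw [Matrix.mul_apply, Matrix.smul_apply, Matrix.one_apply]
      simp only [(Fin.castLE_injective hKT).eq_iff] at h
      rw [← h, smul_eq_mul, Finset.mul_sum]
      refine Finset.sum_congr rfl fun t _ => ?_
      have hsq : Real.sqrt T * Real.sqrt T = T := Real.mul_self_sqrt (by positivity)
      change (Real.sqrt T * U t (Fin.castLE hKT i)) * (Real.sqrt T * U t (Fin.castLE hKT j)) =
        T * (U t (Fin.castLE hKT i) * U t (Fin.castLE hKT j))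
      linear_combination (U t (Fin.castLE hKT i) * U t (Fin.castLE hKT j)) * hsq
    have hVF : V * F = F * Matrix.diagonal (fun i => θ (Fin.castLE hKT i)) := by
      ext t i
      have h := congrFun (congrFun hVU t) (Fin.castLE hKT i)
      rw [Matrix.mul_apply, Matrix.mul_diagonal] at h
      rw [Matrix.mul_apply, Matrix.mul_diagonal]
      simp only [F]
      rw [mul_assoc, ← h, Finset.mul_sum]
      exact Finset.sum_congr rfl fun s _ => by ring
    refine ⟨F, hF, ?_, ?_⟩
    · intro i
      ext t
      have h := congrFun (congrFun hVF t) i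
      rw [Matrix.mul_diagonal, mul_comm] at h
      exact h
    · obtain ⟨hs, hi, ht, h0⟩ := hP F hF
      have e := aux_obj hT0 R lam Q hQsym hQidem hQtr _ hs hi ht
      rw [← hV] at e
      have h1 : R - ((T : ℝ)⁻¹ • (R * F)) * Fᵀ = R * (1 - (T : ℝ)⁻¹ • (F * Fᵀ)) := by
        rw [Matrix.mul_sub, Matrix.mul_one, Matrix.smul_mul, Matrix.mul_smul, Matrix.mul_assoc]
      have h2 : Matrix.trace (V * ((T : ℝ)⁻¹ • (F * Fᵀ))) =
          ∑ i : Fin K, θ (Fin.castLE hKT i) := by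
        rw [Matrix.mul_smul, ← Matrix.mul_assoc, hVF, Matrix.trace_smul, Matrix.trace_mul_comm,
          ← Matrix.mul_assoc, hF, Matrix.smul_mul, Matrix.one_mul, Matrix.trace_smul, smul_smul,
          inv_mul_cancel₀ hT0, one_smul, Matrix.trace_diagonal]
      rw [h1, e, h2]
end
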